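/- There exists a constant c > 0 such that for infinitely many natural numbers n there is a simple (non-weak) pseudoline arrangement (L₁, …, Lₙ) in ℝ² with the following property: for every homeomorphism h : ℝ² → ℝ² such that each set Cᵢ := h(Lᵢ) is a finite union of line segments and closed rays, there is some index i for which Cᵢ has at least c·n bend points. That is, there exist simple arrangements of n pseudolines that, when represented by polygonal chains, require some pseudoline to have Ω(n) bends. -/

import Mathlib

open Set

/-- The Euclidean plane. -/
abbrev Plane := EuclideanSpace ℝ (Fin 2)

/-- A straight line in the plane. -/
def IsLine (S : Set Plane) : Prop :=
  ∃ a u : Plane, u ≠ 0 ∧ S = {p | ∃ t : ℝ, p = a + t • u}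

/-- A pseudoline: image of a straight line under a self-homeomorphism of the plane. -/
def IsPseudoline (L : Set Plane) : Prop :=
  ∃ (h : Plane ≃ₜ Plane) (ℓ : Set Plane), IsLine ℓ ∧ L = h '' ℓ

/-- Two curves cross at `p`: `p` lies on both, and each of them meets every
connected component of the complement of the other. -/
def CrossAt (L M : Set Plane) (p : Plane) : Prop :=
  p ∈ L ∩ M ∧
  (∀ x ∈ Mᶜ, (L ∩ connectedComponentIn Mᶜ x).Nonempty) ∧
  (∀ x ∈ Lᶜ, (M ∩ connectedComponentIn Lᶜ x).Nonempty)

/-- A weak pseudoline arrangement: pairwise distinct pseudolines, any two of which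
intersect in at most one point, and cross wherever they intersect. -/
def IsWeakArrangement {n : ℕ} (L : Fin n → Set Plane) : Prop :=
  Function.Injective L ∧
  (∀ i, IsPseudoline (L i)) ∧
  (∀ i j, i ≠ j → (L i ∩ L j).Subsingleton) ∧
  (∀ i j, i ≠ j → ∀ p ∈ L i ∩ L j, CrossAt (L i) (L j) p)

/-- A (non-weak) pseudoline arrangement: a weak arrangement in which any two
pseudolines intersect (in exactly one point, where they cross). -/
def IsArrangement {n : ℕ} (L : Fin n → Set Plane) : Prop :=
  IsWeakArrangement L ∧ ∀ i j, i ≠ j → (L i ∩ L j).Nonempty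

/-- Simplicity: no point lies on three distinct pseudolines of the family. -/
def IsSimple {n : ℕ} (L : Fin n → Set Plane) : Prop :=
  ∀ (p : Plane) (i j k : Fin n),
    p ∈ L i → p ∈ L j → p ∈ L k → i = j ∨ i = k ∨ j = k

/-- Outerplanarity: every intersection point of two pseudolines of the family lies
in the closure of some unbounded connected component of the complement of the union. -/
def IsOuterplanar {n : ℕ} (L : Fin n → Set Plane) : Prop :=
  ∀ i j, i ≠ j → ∀ p ∈ L i ∩ L j,
    ∃ x ∈ (⋃ k, L k)ᶜ,
      ¬ Bornology.IsBounded (connectedComponentIn (⋃ k, L k)ᶜ x) ∧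
      p ∈ closure (connectedComponentIn (⋃ k, L k)ᶜ x)

/-- A closed ray in the plane. -/
def IsRay (R : Set Plane) : Prop :=
  ∃ a u : Plane, u ≠ 0 ∧ R = {p | ∃ t : ℝ, 0 ≤ t ∧ p = a + t • u}

/-- A closed line segment in the plane. -/
def IsSegment (S : Set Plane) : Prop :=
  ∃ a b : Plane, S = segment ℝ a b

/-- A polygonal curve: a finite union of line segments and closed rays. -/
def IsPolygonal (C : Set Plane) : Prop :=
  ∃ 𝒮 : Finset (Set Plane), (∀ s ∈ 𝒮, IsSegment s ∨ IsRay s) ∧ C = ⋃ s ∈ 𝒮, s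

/-- A bend point of a set `C`: a point of `C` no neighborhood of which meets `C`
in a subset of a straight line. -/
def IsBendPoint (C : Set Plane) (p : Plane) : Prop :=
  p ∈ C ∧ ∀ U ∈ nhds p, ¬ ∃ ℓ : Set Plane, IsLine ℓ ∧ C ∩ U ⊆ ℓ

/-!
A *gadget* is a triangle of curves `a`, `b`, `c` with transversals `α i` and `β i`. If all these
curves were straight on a common time interval, the theorem of Menelaus would attach to each
transversal three positive ratios with product `1`, one for each side line of the triangle and
monotone in the position of the crossing on that line. The order of the crossings is such that on
each line the ratio of `α i` is smaller than that of `β j`, where `j` is `i` up to a permutation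
depending on the line; multiplying over all `i` gives `1 < 1`. So one curve of the gadget bends, and
since only the order of the crossings enters, the same holds after any homeomorphism of the plane.

There is a gadget of nine graphs of functions in which only `a` is not straight. Vertical translates
of nine curves, obtained by repeating its kink periodically, contain a copy of it at each point of
an `N × N` lattice although they are only `333 * N` in number, because every curve takes part in
many copies. A generic small perturbation makes any two curves cross exactly once and removes triple
points. As each copy costs a bend, one of the curves has at least `N / 333` bends.
-/

open Filter Topology
open AffineMap (lineMap)
open scoped Affine NNReal

theorem collinear_of_subset_affineSpan {k V P : Type*} [DivisionRing k] [AddCommGroup V]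
    [Module k V] [AddTorsor V P] {s t : Set P} (ht : Collinear k t)
    (hst : s ⊆ affineSpan k t) : Collinear k s := by
  have hdir : vectorSpan k s ≤ vectorSpan k t := by
    rw [← direction_affineSpan, ← direction_affineSpan k t]
    exact AffineSubspace.direction_le (affineSpan_le.mpr hst)
  exact (Submodule.rank_mono hdir).trans ht

section Collinear

theorem collinear_image_of_locally {k V P X : Type*} [DivisionRing k] [AddCommGroup V]
    [Module k V] [AddTorsor V P] [TopologicalSpace X] [T1Space X] {γ : X → P} {S : Set X}
    (hS : IsPreconnected S) (hγ : InjOn γ S)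
    (hloc : ∀ x ∈ S, ∃ U ∈ 𝓝[S] x, Collinear k (γ '' U)) : Collinear k (γ '' S) := by
  rcases S.subsingleton_or_nontrivial with hsub | hS'
  · obtain rfl | ⟨x, rfl⟩ := hsub.eq_empty_or_singleton
    · simpa using collinear_empty k P
    · simpa using collinear_singleton k (γ x)
  have exists_pair : ∀ x ∈ S, ∀ U ∈ 𝓝[S] x, ∃ y ∈ U, ∃ z ∈ U, γ y ≠ γ z := by
    intro x hx U hU
    obtain ⟨y, ⟨hne, hyS⟩, hyU⟩ := ((accPt_iff_frequently.mp
      (hS.preperfect_of_nontrivial hS' x hx)).and_eventually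
        (mem_nhdsWithin_iff_eventually.mp hU)).exists
    exact ⟨y, hyU hyS, x, mem_of_mem_nhdsWithin hx hU, fun h => hne (hγ hyS hx h)⟩
  choose! U hU hcol using hloc
  let tangent x := affineSpan k (γ '' U x)
  have tangent_eq : ∀ x ∈ S, ∀ y ∈ S, tangent x = tangent y := by
    refine fun x hx y hy => hS.induction₂ (fun x y => tangent x = tangent y) (fun x hx => ?_)
      (fun _ _ _ _ _ _ => Eq.trans) (fun _ _ _ _ => Eq.symm) hx hy
    filter_upwards [eventually_eventually_nhdsWithin.mpr (hU x hx), self_mem_nhdsWithin]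
      with y hxy hy
    obtain ⟨p, hp, q, hq, hpq⟩ := exists_pair y hy _ (inter_mem hxy (hU y hy))
    exact ((hcol x hx).affineSpan_eq_of_ne (mem_image_of_mem γ hp.1)
      (mem_image_of_mem γ hq.1) hpq).symm.trans ((hcol y hy).affineSpan_eq_of_ne
        (mem_image_of_mem γ hp.2) (mem_image_of_mem γ hq.2) hpq)
  obtain ⟨x₀, hx₀⟩ := hS'.nonempty
  have hspan : γ '' S ⊆ tangent x₀ := by
    rintro _ ⟨x, hx, rfl⟩
    rw [tangent_eq x₀ hx₀ x hx]
    exact subset_affineSpan k _ (mem_image_of_mem γ (mem_of_mem_nhdsWithin hx (hU x hx)))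
  exact collinear_of_subset_affineSpan (hcol x₀ hx₀) hspan

variable {E : Type*} [AddCommGroup E] [Module ℝ E] [TopologicalSpace E] [SeparatingDual ℝ E]

theorem exists_continuous_lineMap_eq_of_collinear {s : Set E}
    (hs : Collinear ℝ s) {p q : E} (hp : p ∈ s) (hq : q ∈ s) (hpq : p ≠ q) :
    ∃ φ : E → ℝ, Continuous φ ∧ φ p = 0 ∧ φ q = 1 ∧ ∀ x ∈ s, lineMap p q (φ x) = x := by
  obtain ⟨g, hg⟩ := SeparatingDual.exists_eq_one (R := ℝ) (sub_ne_zero.mpr hpq.symm)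
  refine ⟨fun x => g x - g p, by fun_prop, sub_self _, (map_sub g q p).symm.trans hg,
    fun x hx => ?_⟩
  obtain ⟨r, rfl⟩ := mem_affineSpan_pair_iff_exists_lineMap_eq.mp
    (hs.mem_affineSpan_of_mem_of_ne hp hq hx hpq)
  have hr : g (lineMap p q r) - g p = r := by simp [AffineMap.lineMap_apply, hg]
  exact congrArg (lineMap p q) hr

theorem segment_subset_of_isPreconnected_of_collinear {s : Set E} (hs : IsPreconnected s)
    (hcol : Collinear ℝ s) {p q : E} (hp : p ∈ s) (hq : q ∈ s) : segment ℝ p q ⊆ s := by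
  rcases eq_or_ne p q with rfl | hpq
  · simpa using hp
  obtain ⟨φ, hφ, hφp, hφq, hφs⟩ := exists_continuous_lineMap_eq_of_collinear hcol hp hq hpq
  have hIcc : Icc 0 1 ⊆ φ '' s :=
    (hs.image φ hφ.continuousOn).Icc_subset ⟨p, hp, hφp⟩ ⟨q, hq, hφq⟩
  rw [segment_eq_image_lineMap]
  rintro _ ⟨r, hr, rfl⟩
  obtain ⟨x, hx, rfl⟩ := hIcc hr
  rwa [hφs x hx]

theorem not_collinear_vertices {A B C : Set E}
    (hA : IsPreconnected A) (hA' : Collinear ℝ A) (hB : IsPreconnected B) (hB' : Collinear ℝ B)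
    (hC : IsPreconnected C) (hC' : Collinear ℝ C) {X Y Z : E} (hZ : Z ∈ A ∩ B) (hY : Y ∈ A ∩ C)
    (hX : X ∈ B ∩ C) (hXA : X ∉ A) (hYB : Y ∉ B) (hZC : Z ∉ C) : ¬ Collinear ℝ {X, Y, Z} := by
  intro hcol
  rcases hcol.wbtw_or_wbtw_or_wbtw with h | h | h <;> rw [← mem_segment_iff_wbtw] at h
  · exact hYB (segment_subset_of_isPreconnected_of_collinear hB hB' hX.1 hZ.2 h)
  · exact hZC (segment_subset_of_isPreconnected_of_collinear hC hC' hY.2 hX.2 h)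
  · exact hXA (segment_subset_of_isPreconnected_of_collinear hA hA' hZ.1 hY.1 h)

theorem exists_strictMonoOn_lineMap_eq {γ : ℝ → E}
    {l u a b : ℝ} (hγ : ContinuousOn γ (Icc l u)) (hinj : InjOn γ (Icc l u))
    (hcol : Collinear ℝ (γ '' Icc l u)) (ha : a ∈ Icc l u) (hb : b ∈ Icc l u) (hab : a < b) :
    ∃ P : ℝ → ℝ, StrictMonoOn P (Icc l u) ∧ P a = 0 ∧ P b = 1 ∧
      ∀ t ∈ Icc l u, lineMap (γ a) (γ b) (P t) = γ t := by
  obtain ⟨φ, hφ, hφa, hφb, hφγ⟩ := exists_continuous_lineMap_eq_of_collinear hcol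
    (mem_image_of_mem γ ha) (mem_image_of_mem γ hb) (fun h => hab.ne (hinj ha hb h))
  have hline : ∀ t ∈ Icc l u, lineMap (γ a) (γ b) (φ (γ t)) = γ t :=
    fun t ht => hφγ _ (mem_image_of_mem γ ht)
  have hinj' : InjOn (φ ∘ γ) (Icc l u) := fun s hs t ht hst =>
    hinj hs ht (by rw [← hline s hs, ← hline t ht]; exact congrArg _ hst)
  refine ⟨φ ∘ γ, ?_, hφa, hφb, hline⟩
  rcases (hφ.comp_continuousOn hγ).strictMonoOn_of_injOn_Icc' (ha.1.trans ha.2) hinj' with h | h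
  · exact h
  · have := h ha hb hab
    simp only [Function.comp_apply, hφa, hφb] at this
    linarith

end Collinear

section Menelaus

theorem menelaus {k E : Type*} [Field k] [AddCommGroup E] [Module k E] {X Y Z : E}
    (hXYZ : AffineIndependent k ![X, Y, Z]) {d e f : k}
    (hcol : Collinear k {lineMap Z Y d, lineMap Z X f, lineMap X Y e}) :
    d * (1 - e) * (1 - f) + (1 - d) * e * f = 0 := by
  have coord_eq_zero : ∀ x y z : k, x + y + z = 0 → x • X + y • Y + z • Z = 0 →
      x = 0 ∧ y = 0 ∧ z = 0 := by
    intro x y z hsum hzero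
    have h := affineIndependent_iff.mp hXYZ Finset.univ ![x, y, z]
      (by simpa [Fin.sum_univ_three] using hsum) (by simpa [Fin.sum_univ_three] using hzero)
    exact ⟨h 0 (Finset.mem_univ _), h 1 (Finset.mem_univ _), h 2 (Finset.mem_univ _)⟩
  by_cases hDE : (lineMap Z Y d : E) = lineMap X Y e
  · rw [AffineMap.lineMap_apply_module, AffineMap.lineMap_apply_module] at hDE
    obtain ⟨hX, -, hZ⟩ := coord_eq_zero (1 - e) (e - d) (d - 1) (by ring)
      (by linear_combination (norm := module) -hDE)
    linear_combination (d * (1 - f)) * hX - e * f * hZ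
  · have hF : (lineMap Z X f : E) ∈ line[k, lineMap Z Y d, lineMap X Y e] :=
      hcol.mem_affineSpan_of_mem_of_ne (by simp) (by simp) (by simp) hDE
    obtain ⟨r, hr⟩ := mem_affineSpan_pair_iff_exists_lineMap_eq.mp hF
    simp only [AffineMap.lineMap_apply_module] at hr
    obtain ⟨hX, hY, hZ⟩ := coord_eq_zero (r * (1 - e) - f) ((1 - r) * d + r * e)
      ((1 - r) * (1 - d) - (1 - f)) (by ring) (by linear_combination (norm := module) hr)
    linear_combination (1 - d) * (1 - e) * hY - (1 - d) * e * hX - d * (1 - e) * hZ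

theorem strictMonoOn_div_one_sub : StrictMonoOn (fun t : ℝ => t / (1 - t)) (Iio 1) := by
  intro s hs t ht hst
  simp only [mem_Iio] at hs ht
  rw [div_lt_div_iff₀ (by linarith) (by linarith)]
  linarith

theorem strictAntiOn_one_sub_div : StrictAntiOn (fun t : ℝ => (1 - t) / t) (Ioi 0) := by
  intro s hs t ht hst
  simp only [mem_Ioi] at hs ht
  rw [div_lt_div_iff₀ ht hs]
  linarith

theorem strictMonoOn_one_sub_div_neg : StrictMonoOn (fun t : ℝ => (1 - t) / -t) (Iio 0) := by
  intro s hs t ht hst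
  simp only [mem_Iio] at hs ht
  rw [div_lt_div_iff₀ (by linarith) (by linarith)]
  linarith

variable {E : Type*} [AddCommGroup E] [Module ℝ E] [TopologicalSpace E] [SeparatingDual ℝ E]

/-- An injective parametrisation, on `Icc l u`, of part of a straight line. -/
structure IsStraightArc (γ : ℝ → E) (l u : ℝ) : Prop where
  continuousOn : ContinuousOn γ (Icc l u)
  injOn : InjOn γ (Icc l u)
  collinear : Collinear ℝ (γ '' Icc l u)

theorem affineIndependent_of_meet_iff {γa γb γc : ℝ → E} {l u z x y : ℝ}
    (ha : IsStraightArc γa l u) (hb : IsStraightArc γb l u) (hc : IsStraightArc γc l u)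
    (hz : ∀ s t, γa s = γb t ↔ s = z ∧ t = z) (hx : ∀ s t, γb s = γc t ↔ s = x ∧ t = x)
    (hy : ∀ s t, γa s = γc t ↔ s = y ∧ t = y) (hlz : l ≤ z) (hzx : z < x) (hxy : x < y)
    (hyu : y ≤ u) : AffineIndependent ℝ ![γb x, γc y, γa z] := by
  have preconnected : ∀ {γ : ℝ → E}, IsStraightArc γ l u → IsPreconnected (γ '' Icc l u) :=
    fun hγ => isPreconnected_Icc.image _ hγ.continuousOn
  have mem : ∀ (γ : ℝ → E) {t : ℝ}, z ≤ t → t ≤ y → γ t ∈ γ '' Icc l u :=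
    fun γ t h₁ h₂ => mem_image_of_mem γ ⟨hlz.trans h₁, h₂.trans hyu⟩
  have habz : γa z = γb z := (hz z z).mpr ⟨rfl, rfl⟩
  have hbcx : γb x = γc x := (hx x x).mpr ⟨rfl, rfl⟩
  have hacy : γa y = γc y := (hy y y).mpr ⟨rfl, rfl⟩
  rw [affineIndependent_iff_not_collinear_set]
  refine not_collinear_vertices (preconnected ha) ha.collinear (preconnected hb) hb.collinear
    (preconnected hc) hc.collinear
    ⟨mem γa le_rfl (hzx.trans hxy).le, habz ▸ mem γb le_rfl (hzx.trans hxy).le⟩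
    ⟨hacy ▸ mem γa (hzx.trans hxy).le le_rfl, mem γc (hzx.trans hxy).le le_rfl⟩
    ⟨mem γb hzx.le hxy.le, hbcx ▸ mem γc hzx.le hxy.le⟩ ?_ ?_ ?_
  · rintro ⟨t, -, ht⟩
    exact hzx.ne' ((hz t x).mp ht).2
  · rintro ⟨t, -, ht⟩
    exact hxy.ne' ((hx t y).mp ht).2
  · rintro ⟨t, -, ht⟩
    exact (hzx.trans hxy).ne ((hy z t).mp ht.symm).1

theorem exists_menelaus_weights {γa γb γc : ℝ → E} {l u z x y : ℝ}
    (ha : IsStraightArc γa l u) (hb : IsStraightArc γb l u) (hc : IsStraightArc γc l u)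
    (hz : γa z = γb z) (hx : γb x = γc x) (hy : γa y = γc y)
    (hXYZ : AffineIndependent ℝ ![γb x, γc y, γa z])
    (hlz : l ≤ z) (hzx : z < x) (hxy : x < y) (hyu : y ≤ u) :
    ∃ A B C : ℝ → ℝ, StrictMonoOn A (Ioo z y) ∧ StrictMonoOn B (Ioo l z) ∧
      StrictAntiOn C (Ioo x y) ∧ (∀ t ∈ Ioo z y, 0 < A t) ∧ (∀ t ∈ Ioo l z, 0 < B t) ∧
      (∀ t ∈ Ioo x y, 0 < C t) ∧
      ∀ d ∈ Ioo z y, ∀ f ∈ Ioo l z, ∀ e ∈ Ioo x y, Collinear ℝ {γa d, γb f, γc e} →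
        A d * B f * C e = 1 := by
  have hz' : z ∈ Icc l u := ⟨hlz, by linarith⟩
  have hx' : x ∈ Icc l u := ⟨by linarith, by linarith⟩
  have hy' : y ∈ Icc l u := ⟨by linarith, hyu⟩
  obtain ⟨P, hP, hPz, hPy, hγa⟩ := exists_strictMonoOn_lineMap_eq ha.continuousOn ha.injOn
    ha.collinear hz' hy' (hzx.trans hxy)
  obtain ⟨Q, hQ, hQz, -, hγb⟩ := exists_strictMonoOn_lineMap_eq hb.continuousOn hb.injOn
    hb.collinear hz' hx' hzx
  obtain ⟨R, hR, hRx, hRy, hγc⟩ := exists_strictMonoOn_lineMap_eq hc.continuousOn hc.injOn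
    hc.collinear hx' hy' hxy
  have hzy_sub : Ioo z y ⊆ Icc l u := Ioo_subset_Icc_self.trans (Icc_subset_Icc hlz hyu)
  have hlz_sub : Ioo l z ⊆ Icc l u := Ioo_subset_Icc_self.trans (Icc_subset_Icc le_rfl hz'.2)
  have hxy_sub : Ioo x y ⊆ Icc l u := Ioo_subset_Icc_self.trans (Icc_subset_Icc hx'.1 hyu)
  have P_pos : ∀ t ∈ Ioo z y, 0 < P t := fun t ht => hPz ▸ hP hz' (hzy_sub ht) ht.1
  have P_lt : ∀ t ∈ Ioo z y, P t < 1 := fun t ht => hPy ▸ hP (hzy_sub ht) hy' ht.2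
  have Q_neg : ∀ t ∈ Ioo l z, Q t < 0 := fun t ht => hQz ▸ hQ (hlz_sub ht) hz' ht.2
  have R_pos : ∀ t ∈ Ioo x y, 0 < R t := fun t ht => hRx ▸ hR hx' (hxy_sub ht) ht.1
  have R_lt : ∀ t ∈ Ioo x y, R t < 1 := fun t ht => hRy ▸ hR (hxy_sub ht) hy' ht.2
  refine ⟨fun t => P t / (1 - P t), fun t => (1 - Q t) / -Q t, fun t => (1 - R t) / R t,
    strictMonoOn_div_one_sub.comp (hP.mono hzy_sub) P_lt,
    strictMonoOn_one_sub_div_neg.comp (hQ.mono hlz_sub) Q_neg,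
    strictAntiOn_one_sub_div.comp_strictMonoOn (hR.mono hxy_sub) R_pos,
    fun t ht => div_pos (P_pos t ht) (sub_pos.mpr (P_lt t ht)),
    fun t ht => div_pos (by linarith [Q_neg t ht]) (neg_pos.mpr (Q_neg t ht)),
    fun t ht => div_pos (sub_pos.mpr (R_lt t ht)) (R_pos t ht), fun d hd f hf e he hcol => ?_⟩
  rw [← hγa d (hzy_sub hd), ← hγb f (hlz_sub hf), ← hγc e (hxy_sub he), ← hz, hy, ← hx] at hcol
  have hmen := menelaus hXYZ hcol
  have hP1 : 1 - P d ≠ 0 := (sub_pos.mpr (P_lt d hd)).ne'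
  have hQ0 : Q f ≠ 0 := (Q_neg f hf).ne
  have hR0 : R e ≠ 0 := (R_pos e he).ne'
  field_simp
  linear_combination -hmen

end Menelaus

section Interlaced

/-- A triangle of curves `a`, `b`, `c` together with two families `α`, `β` of transversals. -/
inductive Strand (ι : Type*)
  | a | b | c
  | α (i : ι)
  | β (i : ι)
deriving DecidableEq, Fintype

open Strand

/-- The combinatorics of the gadget: `T k l` is the time at which the strands `k` and `l` cross. The
strand `α i` crosses `a` before `β i` does, crosses `b` before `β (τ i)` does, and crosses `c` after
`β (σ i)` does, the crossings being on prescribed sides of the triangle `a`, `b`, `c`. -/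
structure IsInterlaced {ι : Type*} (T : Strand ι → Strand ι → ℝ) (σ τ : Equiv.Perm ι) (l u : ℝ) :
    Prop where
  ab_lt_bc : T a b < T b c
  bc_lt_ac : T b c < T a c
  ac_lt : T a c < u
  lt_αb (i : ι) : l < T (α i) b
  αb_lt_βb (i : ι) : T (α i) b < T (β (τ i)) b
  βb_lt_ab (i : ι) : T (β i) b < T a b
  ab_lt_αa (i : ι) : T a b < T (α i) a
  αa_lt_βa (i : ι) : T (α i) a < T (β i) a
  βa_lt_ac (i : ι) : T (β i) a < T a c
  bc_lt_βc (i : ι) : T b c < T (β i) c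
  βc_lt_αc (i : ι) : T (β (σ i)) c < T (α i) c
  αc_lt_ac (i : ι) : T (α i) c < T a c

namespace IsInterlaced

variable {ι : Type*} {T : Strand ι → Strand ι → ℝ} {σ τ : Equiv.Perm ι} {l u : ℝ}

theorem αa_mem (hT : IsInterlaced T σ τ l u) (i : ι) : T (α i) a ∈ Ioo (T a b) (T a c) :=
  ⟨hT.ab_lt_αa i, (hT.αa_lt_βa i).trans (hT.βa_lt_ac i)⟩

theorem βa_mem (hT : IsInterlaced T σ τ l u) (i : ι) : T (β i) a ∈ Ioo (T a b) (T a c) :=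
  ⟨(hT.ab_lt_αa i).trans (hT.αa_lt_βa i), hT.βa_lt_ac i⟩

theorem αb_mem (hT : IsInterlaced T σ τ l u) (i : ι) : T (α i) b ∈ Ioo l (T a b) :=
  ⟨hT.lt_αb i, (hT.αb_lt_βb i).trans (hT.βb_lt_ab _)⟩

theorem βb_mem (hT : IsInterlaced T σ τ l u) (i : ι) : T (β i) b ∈ Ioo l (T a b) := by
  obtain ⟨i, rfl⟩ := τ.surjective i
  exact ⟨(hT.lt_αb i).trans (hT.αb_lt_βb i), hT.βb_lt_ab _⟩

theorem αc_mem (hT : IsInterlaced T σ τ l u) (i : ι) : T (α i) c ∈ Ioo (T b c) (T a c) :=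
  ⟨(hT.bc_lt_βc _).trans (hT.βc_lt_αc i), hT.αc_lt_ac i⟩

theorem βc_mem (hT : IsInterlaced T σ τ l u) (i : ι) : T (β i) c ∈ Ioo (T b c) (T a c) := by
  obtain ⟨i, rfl⟩ := σ.surjective i
  exact ⟨hT.bc_lt_βc _, (hT.βc_lt_αc i).trans (hT.αc_lt_ac i)⟩

theorem prod_weight_lt [Fintype ι] [Nonempty ι] (hT : IsInterlaced T σ τ l u) {A B C : ℝ → ℝ}
    (hA : StrictMonoOn A (Ioo (T a b) (T a c))) (hB : StrictMonoOn B (Ioo l (T a b)))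
    (hC : StrictAntiOn C (Ioo (T b c) (T a c))) (hA0 : ∀ t ∈ Ioo (T a b) (T a c), 0 < A t)
    (hB0 : ∀ t ∈ Ioo l (T a b), 0 < B t) (hC0 : ∀ t ∈ Ioo (T b c) (T a c), 0 < C t) :
    ∏ i, A (T (α i) a) * B (T (α i) b) * C (T (α i) c) <
      ∏ i, A (T (β i) a) * B (T (β i) b) * C (T (β i) c) := by
  have hAα := fun i => hA0 _ (hT.αa_mem i)
  have hBα := fun i => hB0 _ (hT.αb_mem i)
  have hCα := fun i => hC0 _ (hT.αc_mem i)
  calc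
    _ < ∏ i, A (T (β i) a) * B (T (β (τ i)) b) * C (T (β (σ i)) c) := by
      refine Finset.prod_lt_prod_of_nonempty
        (fun i _ => mul_pos (mul_pos (hAα i) (hBα i)) (hCα i)) (fun i _ => ?_)
        Finset.univ_nonempty
      have hAi := hA (hT.αa_mem i) (hT.βa_mem i) (hT.αa_lt_βa i)
      have hBi := hB (hT.αb_mem i) (hT.βb_mem _) (hT.αb_lt_βb i)
      have hCi := hC (hT.βc_mem _) (hT.αc_mem i) (hT.βc_lt_αc i)
      exact mul_lt_mul'' (mul_lt_mul'' hAi hBi (hAα i).le (hBα i).le) hCi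
        (mul_pos (hAα i) (hBα i)).le (hCα i).le
    _ = _ := by
      simp only [Finset.prod_mul_distrib, Equiv.prod_comp τ fun i => B (T (β i) b),
        Equiv.prod_comp σ fun i => C (T (β i) c)]

variable {E : Type*} [AddCommGroup E] [Module ℝ E] [TopologicalSpace E] [SeparatingDual ℝ E]

theorem exists_not_collinear [Finite ι] [Nonempty ι] (hT : IsInterlaced T σ τ l u)
    {γ : Strand ι → ℝ → E} (hγ : ∀ k, ContinuousOn (γ k) (Icc l u))
    (hinj : ∀ k, InjOn (γ k) (Icc l u))
    (hmeet : ∀ j k, j ≠ k → ∀ s t, γ j s = γ k t ↔ s = T j k ∧ t = T j k) :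
    ∃ k, ¬ Collinear ℝ (γ k '' Icc l u) := by
  by_contra! hcol
  cases nonempty_fintype ι
  have harc : ∀ k, IsStraightArc (γ k) l u := fun k => ⟨hγ k, hinj k, hcol k⟩
  have meets : ∀ {j k}, j ≠ k → γ j (T j k) = γ k (T j k) :=
    fun h => (hmeet _ _ h _ _).mpr ⟨rfl, rfl⟩
  have hlz : l < T a b := (hT.αb_mem (Classical.arbitrary ι)).1.trans (hT.αb_mem _).2
  obtain ⟨A, B, C, hA, hB, hC, hA0, hB0, hC0, hABC⟩ := exists_menelaus_weights
    (harc a) (harc b) (harc c) (meets nofun) (meets nofun) (meets nofun)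
    (affineIndependent_of_meet_iff (harc a) (harc b) (harc c) (hmeet a b nofun) (hmeet b c nofun)
      (hmeet a c nofun) hlz.le hT.ab_lt_bc hT.bc_lt_ac hT.ac_lt.le)
    hlz.le hT.ab_lt_bc hT.bc_lt_ac hT.ac_lt.le
  have weight_eq_one : ∀ k, k ≠ a → k ≠ b → k ≠ c → T k a ∈ Ioo (T a b) (T a c) →
      T k b ∈ Ioo l (T a b) → T k c ∈ Ioo (T b c) (T a c) →
      A (T k a) * B (T k b) * C (T k c) = 1 := by
    intro k hka hkb hkc hd hf he
    refine hABC _ hd _ hf _ he ((hcol k).subset ?_)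
    have mem : ∀ {t}, l < t → t < T a c → γ k t ∈ γ k '' Icc l u :=
      fun h₁ h₂ => mem_image_of_mem _ ⟨h₁.le, (h₂.trans hT.ac_lt).le⟩
    rw [← meets hka, ← meets hkb, ← meets hkc]
    rintro _ (rfl | rfl | rfl)
    · exact mem (hlz.trans hd.1) hd.2
    · exact mem hf.1 (hf.2.trans (hT.ab_lt_bc.trans hT.bc_lt_ac))
    · exact mem (hlz.trans (hT.ab_lt_bc.trans he.1)) he.2
  have weight_α := fun i =>
    weight_eq_one (α i) nofun nofun nofun (hT.αa_mem i) (hT.αb_mem i) (hT.αc_mem i)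
  have weight_β := fun i =>
    weight_eq_one (β i) nofun nofun nofun (hT.βa_mem i) (hT.βb_mem i) (hT.βc_mem i)
  have hlt := hT.prod_weight_lt hA hB hC hA0 hB0 hC0
  simp only [weight_α, weight_β, Finset.prod_const_one, lt_irrefl] at hlt

end IsInterlaced

end Interlaced

namespace Strand

/-- Slopes of the concrete gadget, whose strand `k` is the graph of
`t ↦ slope k * t + intercept k + kink k * |t|`. All its values at integers are integers, so that
the positions of the crossings can be checked by evaluation. No slope is within the kink of `a` of
the slope of `a`, so that `a` meets every other strand exactly once. -/
def slope : Strand (Fin 3) → ℕ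
  | a => 4
  | b => 36
  | c => 0
  | α i => ![27, 24, 9] i
  | β i => ![12, 12, 32] i

/-- Values at `0` of the strands of the concrete gadget. -/
def intercept : Strand (Fin 3) → ℤ
  | a => 0
  | b => 164
  | c => 380
  | α i => ![55, -341, 1] i
  | β i => ![21, -123, -3] i

/-- Coefficients of `|t|` in the strands of the concrete gadget: only `a` is not straight. -/
def kink : Strand (Fin 3) → ℕ
  | a => 3
  | _ => 0

/-- Height of strand `k` of the concrete gadget at the integer time `m`. -/
def height (k : Strand (Fin 3)) (m : ℤ) : ℤ :=
  slope k * m + intercept k + kink k * |m|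

theorem mem_Ioo_of_height_mul_neg {F G : ℝ → ℝ} {k l : Strand (Fin 3)} {m n : ℤ} {t : ℝ}
    (hF : Continuous F) (hG : Continuous G) (ht : ∀ s, F s = G s → s = t)
    (hFm : |F m - height k m| < 1 / 2) (hFn : |F n - height k n| < 1 / 2)
    (hGm : |G m - height l m| < 1 / 2) (hGn : |G n - height l n| < 1 / 2) (hmn : m ≤ n)
    (hsign : (height k m - height l m) * (height k n - height l n) < 0) : t ∈ Ioo (m : ℝ) n := by
  have hmn' : (m : ℝ) ≤ n := mod_cast hmn
  have hcont : ContinuousOn (fun s => F s - G s) (Icc (m : ℝ) n) := by fun_prop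
  rw [abs_sub_lt_iff] at hFm hFn hGm hGn
  obtain ⟨s, hs, hs0⟩ : (0 : ℝ) ∈ (fun s => F s - G s) '' Ioo (m : ℝ) n := by
    rcases mul_neg_iff.mp hsign with ⟨hm, hn⟩ | ⟨hm, hn⟩
    · have hm' : (1 : ℝ) ≤ height k m - height l m := mod_cast hm
      have hn' : (height k n - height l n : ℝ) ≤ -1 := mod_cast Int.le_sub_one_of_lt hn
      exact intermediate_value_Ioo' hmn' hcont ⟨by linarith, by linarith⟩
    · have hm' : (height k m - height l m : ℝ) ≤ -1 := mod_cast Int.le_sub_one_of_lt hm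
      have hn' : (1 : ℝ) ≤ height k n - height l n := mod_cast hn
      exact intermediate_value_Ioo hmn' hcont ⟨by linarith, by linarith⟩
  exact ht s (sub_eq_zero.mp hs0) ▸ hs

theorem isInterlaced_of_abs_sub_height_lt {F : Strand (Fin 3) → ℝ → ℝ}
    {T : Strand (Fin 3) → Strand (Fin 3) → ℝ} (hF : ∀ k, Continuous (F k))
    (hheight : ∀ k (m : ℤ), |m| ≤ 55 → |F k m - height k m| < 1 / 2)
    (hT : ∀ k l, k ≠ l → ∀ t, F k t = F l t → t = T k l) :
    IsInterlaced T (Equiv.subRight 1) (Equiv.addRight 1) (-55) 55 := by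
  have cross : ∀ (k l) (m n : ℤ), k ≠ l → |m| ≤ 55 → |n| ≤ 55 → m ≤ n →
      (height k m - height l m) * (height k n - height l n) < 0 → T k l ∈ Ioo (m : ℝ) n :=
    fun k l m n hkl hm hn => mem_Ioo_of_height_mul_neg (hF k) (hF l) (hT k l hkl)
      (hheight k m hm) (hheight k n hn) (hheight l m hm) (hheight l n hn)
  have ab := cross a b (-5) (-4) nofun (by decide) (by decide) (by decide) (by decide)
  have bc := cross b c 5 7 nofun (by decide) (by decide) (by decide) (by decide)
  have ac := cross a c 54 55 nofun (by decide) (by decide) (by decide) (by decide)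
  have αa := fun i => cross (α i) a (-4) (![-2, 21, 0] i) nofun (by decide)
    (by decide +revert) (by decide +revert) (by decide +revert)
  have βa := fun i => cross (β i) a (![-2, 21, 0] i) 54 nofun (by decide +revert)
    (by decide) (by decide +revert) (by decide +revert)
  have αb := fun i => cross (α i) b (-55) (![-12, -42, -6] i) nofun (by decide)
    (by decide +revert) (by decide +revert) (by decide +revert)
  have βb := fun i => cross (β (i + 1)) b (![-12, -42, -6] i) (-5) nofun (by decide +revert)
    (by decide) (by decide +revert) (by decide +revert)
  have αc := fun i => cross (α i) c (![12, 30, 42] i) 54 nofun (by decide +revert)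
    (by decide) (by decide +revert) (by decide +revert)
  have βc := fun i => cross (β (i - 1)) c 7 (![12, 30, 42] i) nofun (by decide)
    (by decide +revert) (by decide +revert) (by decide +revert)
  push_cast at ab bc ac αa βa αb βb αc βc
  exact
    { ab_lt_bc := by linarith [ab.2, bc.1]
      bc_lt_ac := by linarith [bc.2, ac.1]
      ac_lt := ac.2
      lt_αb := fun i => (αb i).1
      αb_lt_βb := fun i => (αb i).2.trans (βb i).1
      βb_lt_ab := fun i => by simpa using (βb (i - 1)).2.trans ab.1
      ab_lt_αa := fun i => ab.2.trans (αa i).1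
      αa_lt_βa := fun i => (αa i).2.trans (βa i).1
      βa_lt_ac := fun i => (βa i).2.trans ac.1
      bc_lt_βc := fun i => by simpa using bc.2.trans (βc (i + 1)).1
      βc_lt_αc := fun i => (βc i).2.trans (αc i).1
      αc_lt_ac := fun i => (αc i).2.trans ac.1 }

end Strand

section Bends

theorem finite_setOf_forall_nhds_not_collinear {k V P : Type*} [DivisionRing k] [AddCommGroup V]
    [Module k V] [AddTorsor V P] [TopologicalSpace P] {𝒮 : Finset (Set P)}
    (hclosed : ∀ s ∈ 𝒮, IsClosed s) (hcol : ∀ s ∈ 𝒮, Collinear k s) :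
    {p | ∀ U ∈ 𝓝 p, ¬ Collinear k ((⋃ s ∈ 𝒮, s) ∩ U)}.Finite := by
  classical
  -- Two such points on the same members of `𝒮` would put all those members on a common line.
  refine Finite.of_injOn (f := fun p => 𝒮.filter (p ∈ ·)) (t := 𝒮.powerset)
    (fun p _ => Finset.mem_powerset.mpr (𝒮.filter_subset _)) ?_ (Finset.finite_toSet _)
  intro p hp q _ hpq
  by_contra hne
  have hU : ⋂ s ∈ 𝒮.filter (p ∉ ·), sᶜ ∈ 𝓝 p := by
    refine (biInter_finset_mem _).mpr fun s hs => ?_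
    rw [Finset.mem_filter] at hs
    exact (hclosed s hs.1).isOpen_compl.mem_nhds hs.2
  refine hp _ hU (collinear_of_subset_affineSpan (collinear_pair k p q) ?_)
  rintro x ⟨hx, hxU⟩
  obtain ⟨s, hs, hxs⟩ := mem_iUnion₂.mp hx
  have hps : p ∈ s := by
    by_contra hps
    exact mem_iInter₂.mp hxU s (Finset.mem_filter.mpr ⟨hs, hps⟩) hxs
  have hqs : q ∈ s :=
    (Finset.mem_filter.mp ((Finset.ext_iff.mp hpq s).mp (Finset.mem_filter.mpr ⟨hs, hps⟩))).2
  exact (hcol s hs).mem_affineSpan_of_mem_of_ne hps hqs hxs hne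

theorem collinear_iff_exists_isLine {s : Set Plane} :
    Collinear ℝ s ↔ ∃ ℓ, IsLine ℓ ∧ s ⊆ ℓ := by
  constructor
  · rw [collinear_iff_exists_forall_eq_smul_vadd]
    rintro ⟨a, v, h⟩
    obtain ⟨u, hu, hvu⟩ : ∃ u : Plane, u ≠ 0 ∧ ∃ c : ℝ, v = c • u := by
      rcases eq_or_ne v 0 with rfl | hv
      · obtain ⟨u, hu⟩ := exists_ne (0 : Plane)
        exact ⟨u, hu, 0, (zero_smul ℝ u).symm⟩
      · exact ⟨v, hv, 1, (one_smul ℝ v).symm⟩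
    obtain ⟨c, rfl⟩ := hvu
    refine ⟨_, ⟨a, u, hu, rfl⟩, fun p hp => ?_⟩
    obtain ⟨r, rfl⟩ := h p hp
    exact ⟨r * c, by rw [vadd_eq_add, smul_smul, add_comm]⟩
  · rintro ⟨_, ⟨a, u, -, rfl⟩, hs⟩
    refine (collinear_iff_exists_forall_eq_smul_vadd (k := ℝ) s).mpr ⟨a, u, fun p hp => ?_⟩
    obtain ⟨t, rfl⟩ := hs hp
    exact ⟨t, by rw [vadd_eq_add, add_comm]⟩

theorem isBendPoint_iff {C : Set Plane} {p : Plane} :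
    IsBendPoint C p ↔ p ∈ C ∧ ∀ U ∈ 𝓝 p, ¬ Collinear ℝ (C ∩ U) := by
  simp only [IsBendPoint, collinear_iff_exists_isLine]

theorem IsSegment.isClosed {s : Set Plane} (hs : IsSegment s) : IsClosed s := by
  obtain ⟨a, b, rfl⟩ := hs
  rw [segment_eq_image_lineMap]
  exact (isCompact_Icc.image AffineMap.lineMap_continuous).isClosed

theorem IsSegment.collinear {s : Set Plane} (hs : IsSegment s) : Collinear ℝ s := by
  obtain ⟨a, b, rfl⟩ := hs
  refine collinear_of_subset_affineSpan (collinear_pair ℝ a b) ?_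
  rw [← convexHull_pair]
  exact convexHull_subset_affineSpan _

theorem IsRay.isClosed {s : Set Plane} (hs : IsRay s) : IsClosed s := by
  obtain ⟨a, u, hu, rfl⟩ := hs
  have himage : {p | ∃ t : ℝ, 0 ≤ t ∧ p = a + t • u} =
      (Homeomorph.addLeft a ∘ fun t : ℝ => t • u) '' Ici 0 := by
    ext p
    simp [eq_comm]
  rw [himage]
  exact ((Homeomorph.addLeft a).isClosedEmbedding.comp
    (isClosedEmbedding_smul_left hu)).isClosedMap _ isClosed_Ici

theorem IsRay.collinear {s : Set Plane} (hs : IsRay s) : Collinear ℝ s := by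
  obtain ⟨a, u, hu, rfl⟩ := hs
  exact collinear_iff_exists_isLine.mpr
    ⟨_, ⟨a, u, hu, rfl⟩, fun p ⟨t, _, hp⟩ => ⟨t, hp⟩⟩

theorem IsPolygonal.finite_isBendPoint {C : Set Plane} (hC : IsPolygonal C) :
    {p | IsBendPoint C p}.Finite := by
  obtain ⟨𝒮, h𝒮, rfl⟩ := hC
  refine (finite_setOf_forall_nhds_not_collinear
    (fun s hs => (h𝒮 s hs).elim IsSegment.isClosed IsRay.isClosed)
    (fun s hs => (h𝒮 s hs).elim IsSegment.collinear IsRay.collinear)).subset ?_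
  exact fun p hp => (isBendPoint_iff.mp hp).2

end Bends

section Graphs

/-- The graph of `f : ℝ → ℝ`, as a subset of the Euclidean plane. -/
def planeGraph (f : ℝ → ℝ) : Set Plane :=
  {p | p 1 = f (p 0)}

theorem mem_planeGraph {f : ℝ → ℝ} {p : Plane} : p ∈ planeGraph f ↔ p 1 = f (p 0) :=
  Iff.rfl

theorem continuous_vec_two {X : Type*} [TopologicalSpace X] {f g : X → ℝ} (hf : Continuous f)
    (hg : Continuous g) : Continuous fun x => (!₂[f x, g x] : Plane) := by
  refine (PiLp.continuous_toLp 2 _).comp (continuous_pi fun i => ?_)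
  fin_cases i
  · exact hf
  · exact hg

theorem vec_two_mem_planeGraph {f : ℝ → ℝ} {x : ℝ} : (!₂[x, f x] : Plane) ∈ planeGraph f := by
  simp [planeGraph]

theorem planeGraph_eq_range {f : ℝ → ℝ} :
    planeGraph f = range fun x => (!₂[x, f x] : Plane) := by
  ext p
  refine ⟨fun hp => ⟨p 0, ?_⟩, ?_⟩
  · ext i
    fin_cases i
    · simp
    · simpa using (mem_planeGraph.mp hp).symm
  · rintro ⟨x, rfl⟩
    exact vec_two_mem_planeGraph

theorem planeGraph_injective : Function.Injective planeGraph := fun f g h => funext fun x => by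
  have hx : (!₂[x, f x] : Plane) ∈ planeGraph g := h ▸ vec_two_mem_planeGraph
  simpa [mem_planeGraph] using hx

theorem isPreconnected_planeGraph {f : ℝ → ℝ} (hf : Continuous f) :
    IsPreconnected (planeGraph f) :=
  planeGraph_eq_range ▸ isPreconnected_range (continuous_vec_two continuous_id hf)

/-- The vertical shear of the plane that adds a continuous function of the first coordinate. -/
def shear {f : ℝ → ℝ} (hf : Continuous f) : Plane ≃ₜ Plane where
  toFun p := !₂[p 0, p 1 + f (p 0)]
  invFun p := !₂[p 0, p 1 - f (p 0)]
  left_inv p := by ext i; fin_cases i <;> simp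
  right_inv p := by ext i; fin_cases i <;> simp
  continuous_toFun := continuous_vec_two (by fun_prop) (by fun_prop)
  continuous_invFun := continuous_vec_two (by fun_prop) (by fun_prop)

theorem isPseudoline_planeGraph {f : ℝ → ℝ} (hf : Continuous f) :
    IsPseudoline (planeGraph f) := by
  refine ⟨shear hf, {p | ∃ t : ℝ, p = 0 + t • !₂[1, 0]}, ⟨0, !₂[1, 0], ?_, rfl⟩, ?_⟩
  · simp
  · rw [planeGraph_eq_range]
    ext p
    simp [shear, eq_comm]

theorem exists_mem_connectedComponentIn_compl_planeGraph {f g : ℝ → ℝ} (hg : Continuous g)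
    (hfg : Function.Surjective fun x => f x - g x) {p : Plane} (hp : p ∈ (planeGraph g)ᶜ) :
    (planeGraph f ∩ connectedComponentIn (planeGraph g)ᶜ p).Nonempty := by
  -- The translate of the graph of `g` through `p` stays in one component and meets that of `f`.
  let v := p 1 - g (p 0)
  have hv0 : v ≠ 0 := sub_ne_zero.mpr hp
  obtain ⟨x, hx⟩ := hfg v
  have htranslate : planeGraph (fun x => g x + v) ⊆ (planeGraph g)ᶜ := by
    intro q hq hq'
    rw [mem_planeGraph] at hq hq'
    exact hv0 (by linarith)
  refine ⟨!₂[x, f x], vec_two_mem_planeGraph,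
    (isPreconnected_planeGraph (hg.add continuous_const)).subset_connectedComponentIn
      (x := p) ?_ htranslate ?_⟩
  · simp [mem_planeGraph]
  · have hx' : f x = g x + v := by linarith
    simpa [mem_planeGraph] using hx'

theorem isArrangement_planeGraph {n : ℕ} {f : Fin n → ℝ → ℝ} (hf : ∀ i, Continuous (f i))
    (hbij : ∀ i j, i ≠ j → Function.Bijective fun x => f i x - f j x) :
    IsArrangement fun i => planeGraph (f i) := by
  have hinter : ∀ i j, i ≠ j → ∃ p, planeGraph (f i) ∩ planeGraph (f j) = {p} := by
    intro i j hij
    obtain ⟨x, hx, hunique⟩ := (hbij i j hij).existsUnique 0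
    have hx' := sub_eq_zero.mp hx
    refine ⟨!₂[x, f i x], Subset.antisymm ?_ ?_⟩
    · rw [planeGraph_eq_range]
      rintro _ ⟨⟨y, rfl⟩, hy⟩
      rw [mem_planeGraph] at hy
      obtain rfl : y = x := hunique y (by simpa [sub_eq_zero] using hy)
      rfl
    · rintro _ rfl
      exact ⟨vec_two_mem_planeGraph, hx' ▸ vec_two_mem_planeGraph⟩
  refine ⟨⟨fun i j hij => ?_, fun i => isPseudoline_planeGraph (hf i), fun i j hij => ?_,
    fun i j hij p hp => ⟨hp, fun q hq => ?_, fun q hq => ?_⟩⟩, fun i j hij => ?_⟩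
  · by_contra hne
    obtain ⟨x, hx⟩ := (hbij i j hne).surjective 1
    simp [planeGraph_injective hij] at hx
  · obtain ⟨p, hp⟩ := hinter i j hij
    exact hp ▸ subsingleton_singleton
  · exact exists_mem_connectedComponentIn_compl_planeGraph (hf j) (hbij i j hij).surjective hq
  · exact exists_mem_connectedComponentIn_compl_planeGraph (hf i)
      (hbij j i hij.symm).surjective hq
  · obtain ⟨p, hp⟩ := hinter i j hij
    exact hp ▸ singleton_nonempty p

theorem isSimple_planeGraph {n : ℕ} {f : Fin n → ℝ → ℝ}
    (h : ∀ x i j k, f i x = f j x → f i x = f k x → i = j ∨ i = k ∨ j = k) :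
    IsSimple fun i => planeGraph (f i) :=
  fun p i j k hi hj hk => h (p 0) i j k (hi.symm.trans hj) (hi.symm.trans hk)

end Graphs

section Perturbation

theorem bijective_mul_add_of_lipschitzWith {𝕜 : Type*} [NontriviallyNormedField 𝕜]
    [CompleteSpace 𝕜] {a : 𝕜} {K : ℝ≥0} {φ : 𝕜 → 𝕜} (hφ : LipschitzWith K φ) (hK : K < ‖a‖₊) :
    Function.Bijective fun x => a * x + φ x := by
  have ha : a ≠ 0 := nnnorm_pos.mp (bot_le.trans_lt hK)
  let A : 𝕜 ≃L[𝕜] 𝕜 := ContinuousLinearEquiv.unitsEquivAut 𝕜 (Units.mk0 a ha)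
  have hA : ApproximatesLinearOn (fun x => a * x + φ x) (A : 𝕜 →L[𝕜] 𝕜) univ K := by
    refine ApproximatesLinearOn.approximatesLinearOn_iff_lipschitzOnWith.mpr ?_
    convert hφ.lipschitzOnWith using 1
    ext x
    simp [A, mul_comm]
  have hA_symm : (A.symm : 𝕜 →L[𝕜] 𝕜) = ContinuousLinearMap.toSpanSingleton 𝕜 a⁻¹ := by
    ext
    simp [A]
  have hc : Subsingleton 𝕜 ∨ K < ‖(A.symm : 𝕜 →L[𝕜] 𝕜)‖₊⁻¹ := by
    rw [hA_symm, ContinuousLinearMap.nnnorm_toSpanSingleton, nnnorm_inv, inv_inv]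
    exact Or.inr hK
  exact ⟨injOn_univ.mp (injOn_iff_injective.mpr (hA.injective hc)), hA.surjective hc⟩

theorem exists_translation_no_triple_point {ι : Type*} [Finite ι] {g : ι → ℝ → ℝ}
    (hg : ∀ i j, i ≠ j → Function.Injective fun x => g i x - g j x) {t : Set ℝ} (ht : t.Infinite) :
    ∃ b : ι → ℝ, (∀ i, b i ∈ t) ∧ ∀ x i j k, g i x + b i = g j x + b j →
      g i x + b i = g k x + b k → i = j ∨ i = k ∨ j = k := by
  classical
  cases nonempty_fintype ι
  suffices H : ∀ s : Finset ι, ∃ b : ι → ℝ, (∀ i, b i ∈ t) ∧ ∀ x, ∀ i ∈ s, ∀ j ∈ s, ∀ k ∈ s,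
      g i x + b i = g j x + b j → g i x + b i = g k x + b k → i = j ∨ i = k ∨ j = k by
    simpa using H Finset.univ
  intro s
  induction s using Finset.induction_on with
  | empty =>
    obtain ⟨v, hv⟩ := ht.nonempty
    exact ⟨fun _ => v, fun _ => hv, by simp⟩
  | insert m s hm ih =>
    obtain ⟨b, hbt, hb⟩ := ih
    let meet (i j : ι) : Set ℝ := {x | g i x + b i = g j x + b j}
    have meet_subsingleton : ∀ i j, i ≠ j → (meet i j).Subsingleton := by
      intro i j hij x hx y hy
      simp only [meet, mem_ofPred_eq] at hx hy
      exact hg i j hij (by linarith)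
    have forbidden_finite :
        (⋃ p ∈ s.offDiag, (fun x => g p.1 x + b p.1 - g m x) '' meet p.1 p.2).Finite :=
      s.offDiag.finite_toSet.biUnion fun p hp =>
        ((meet_subsingleton _ _ (Finset.mem_offDiag.mp hp).2.2).image _).finite
    obtain ⟨v, hvt, hv⟩ := (ht.sdiff forbidden_finite).nonempty
    have avoids : ∀ x, ∀ i ∈ s, ∀ j ∈ s, i ≠ j → g i x + b i = g j x + b j →
        g i x + b i ≠ g m x + v := by
      intro x i hi j hj hij hx hxv
      exact hv (mem_biUnion (x := (i, j)) (Finset.mem_offDiag.mpr ⟨hi, hj, hij⟩)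
        ⟨x, hx, by simp [hxv]⟩)
    have hupdate : ∀ i ∈ s, Function.update b m v i = b i :=
      fun i hi => Function.update_of_ne (ne_of_mem_of_not_mem hi hm) v b
    refine ⟨Function.update b m v, fun i => ?_, fun x i hi j hj k hk hij hik => ?_⟩
    · rcases eq_or_ne i m with rfl | him
      · rwa [Function.update_self]
      · rw [Function.update_of_ne him]
        exact hbt i
    · have := Function.update_self m v b
      grind

end Perturbation

section Grid

/-- The `1`-Lipschitz sawtooth of period `120`, equal to `|t|` for `|t| ≤ 60`: it repeats the kink
of the gadget at every multiple of `120`. -/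
noncomputable def sawtooth (x : ℝ) : ℝ :=
  ‖(x : AddCircle (120 : ℝ))‖

theorem lipschitzWith_sawtooth : LipschitzWith 1 sawtooth := by
  refine LipschitzWith.mk_one fun x y => (abs_norm_sub_norm_le _ _).trans ?_
  rw [← AddCircle.coe_sub]
  exact QuotientAddGroup.norm_mk_le_norm

theorem sawtooth_mul_add (m : ℕ) {t : ℝ} (ht : |t| ≤ 60) : sawtooth (120 * m + t) = |t| := by
  have hperiod : ((120 * m + t : ℝ) : AddCircle (120 : ℝ)) = t := by
    rw [mul_comm, ← nsmul_eq_mul, AddCircle.coe_add, AddCircle.coe_nsmul, AddCircle.coe_period,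
      nsmul_zero, zero_add]
  rw [sawtooth, hperiod, AddCircle.norm_coe_eq_abs_iff _ (by norm_num)]
  exact ht.trans (by norm_num)

/-- The curves of class `k`: vertical translates, indexed by `j`, that run through a gadget at every
point `(120 * x, -120 * y)` of the lattice with `j = y + k.slope * x`. -/
noncomputable def gridCurve (k : Strand (Fin 3)) (j : ℕ) (x : ℝ) : ℝ :=
  k.slope * x + k.intercept + k.kink * sawtooth x - 120 * j

theorem continuous_gridCurve (k : Strand (Fin 3)) (j : ℕ) : Continuous (gridCurve k j) := by
  have := lipschitzWith_sawtooth.continuous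
  unfold gridCurve
  fun_prop

theorem gridCurve_eq_height_sub (k : Strand (Fin 3)) (x y : ℕ) {m : ℤ} (hm : |m| ≤ 60) :
    gridCurve k (y + k.slope * x) (120 * x + m) = k.height m - 120 * y := by
  have hm' : |(m : ℝ)| ≤ 60 := mod_cast hm
  rw [gridCurve, sawtooth_mul_add x hm', Strand.height]
  push_cast
  ring

theorem abs_kink_sub_lt (k l : Strand (Fin 3)) {d : ℝ} (hd : d ≠ 0) (hd1 : |d| < 1) :
    |(k.kink - l.kink : ℝ)| < |k.slope - l.slope + d| := by
  have table : ∀ k l : Strand (Fin 3), k.kink = l.kink ∨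
      |(k.kink : ℤ) - l.kink| + 1 ≤ |(k.slope : ℤ) - l.slope| := by decide
  rcases table k l with h | h
  · rw [h, sub_self, abs_zero, abs_pos]
    intro hzero
    obtain ⟨z, hz⟩ : ∃ z : ℤ, d = z := ⟨l.slope - k.slope, by push_cast; linarith⟩
    rw [hz, ← Int.cast_abs, ← Int.cast_one, Int.cast_lt, Int.abs_lt_one_iff] at hd1
    exact hd (by rw [hz, hd1, Int.cast_zero])
  · have h' : |(k.kink - l.kink : ℝ)| + 1 ≤ |(k.slope - l.slope : ℝ)| := by exact_mod_cast h
    linarith [abs_sub_abs_le_abs_add (k.slope - l.slope : ℝ) d]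

theorem bijective_gridCurve_sub (k l : Strand (Fin 3)) (i j : ℕ) {a a' : ℝ} (ha : a ≠ a')
    (ha1 : |a - a'| < 1) (b b' : ℝ) : Function.Bijective fun x =>
      (gridCurve k i x + a * x + b) - (gridCurve l j x + a' * x + b') := by
  have hlip : LipschitzWith ‖(k.kink - l.kink : ℝ)‖₊ fun x => (k.kink - l.kink) * sawtooth x +
      (k.intercept - l.intercept - 120 * i + 120 * j + b - b') := by
    simpa using ((lipschitzWith_smul (k.kink - l.kink : ℝ)).comp lipschitzWith_sawtooth).add
      (LipschitzWith.const _)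
  convert bijective_mul_add_of_lipschitzWith hlip
    (abs_kink_sub_lt k l (sub_ne_zero.mpr ha) ha1) using 2
  simp only [gridCurve]
  ring

theorem exists_perturbation {ι : Type*} [Finite ι] (k : ι → Strand (Fin 3)) (j : ι → ℕ) {R : ℝ}
    (hR : 0 ≤ R) : ∃ f : ι → ℝ → ℝ, (∀ i, Continuous (f i)) ∧
      (∀ i i', i ≠ i' → Function.Bijective fun x => f i x - f i' x) ∧
      (∀ x i₁ i₂ i₃, f i₁ x = f i₂ x → f i₁ x = f i₃ x → i₁ = i₂ ∨ i₁ = i₃ ∨ i₂ = i₃) ∧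
      ∀ i x, |x| ≤ R → |f i x - gridCurve (k i) (j i) x| < 1 / 2 := by
  have hδ : 0 < 1 / (4 * (R + 1)) := by positivity
  obtain ⟨a, ha_inj, ha⟩ : ∃ a : ι → ℝ, Function.Injective a ∧
      ∀ i, a i ∈ Ioo 0 (1 / (4 * (R + 1))) := by
    obtain ⟨e, he⟩ := exists_injective_nat ι
    let A := (Ioo_infinite hδ).natEmbedding
    exact ⟨fun i => A (e i), Subtype.val_injective.comp (A.injective.comp he),
      fun i => (A (e i)).2⟩
  have ha_mul : ∀ i, a i * (R + 1) < 1 / 4 := fun i => by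
    have := (lt_div_iff₀ (by positivity)).mp (ha i).2
    linarith
  have ha_sub : ∀ i i', |a i - a i'| < 1 := fun i i' =>
    abs_sub_lt_iff.mpr ⟨by nlinarith [ha_mul i, (ha i).1, (ha i').1],
      by nlinarith [ha_mul i', (ha i).1, (ha i').1]⟩
  have hbij := fun i i' (hi : i ≠ i') => bijective_gridCurve_sub (k i) (k i') (j i) (j i')
    (ha_inj.ne hi) (ha_sub i i')
  obtain ⟨b, hb, htriple⟩ := exists_translation_no_triple_point
    (g := fun i x => gridCurve (k i) (j i) x + a i * x)
    (fun i i' hi => by simpa using (hbij i i' hi 0 0).injective)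
    (Ioo_infinite (show (0 : ℝ) < 1 / 4 by norm_num))
  refine ⟨fun i x => gridCurve (k i) (j i) x + a i * x + b i, fun i => ?_,
    fun i i' hi => hbij i i' hi _ _, htriple, fun i x hx => ?_⟩
  · have := continuous_gridCurve (k i) (j i)
    fun_prop
  · have hax : |a i * x| < 1 / 4 := by
      rw [abs_mul, abs_of_pos (ha i).1]
      exact (mul_le_mul_of_nonneg_left (by linarith) (ha i).1.le).trans_lt (ha_mul i)
    simp only [add_assoc, add_sub_cancel_left]
    linarith [abs_add_le (a i * x) (b i), abs_of_pos (hb i).1, (hb i).2]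

end Grid

section Count

theorem exists_isBendPoint_of_not_collinear {γ : ℝ → Plane} {S : Set ℝ} {C : Set Plane}
    (hS : IsPreconnected S) (hγ : ContinuousOn γ S) (hinj : InjOn γ S) (hC : MapsTo γ S C)
    (hcol : ¬ Collinear ℝ (γ '' S)) : ∃ t ∈ S, IsBendPoint C (γ t) := by
  contrapose! hcol
  refine collinear_image_of_locally hS hinj fun t ht => ?_
  have ht' := hcol t ht
  simp only [isBendPoint_iff, hC ht, true_and, not_forall, not_not] at ht'
  obtain ⟨U, hU, hUC⟩ := ht'
  refine ⟨S ∩ γ ⁻¹' U, inter_mem self_mem_nhdsWithin (hγ t ht hU), hUC.subset ?_⟩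
  rintro _ ⟨s, hs, rfl⟩
  exact ⟨hC hs.1, hs.2⟩

theorem exists_isBendPoint_image_planeGraph {f : Strand (Fin 3) → ℝ → ℝ} {x y : ℝ}
    (hf : ∀ k, Continuous (f k))
    (hbij : ∀ k l, k ≠ l → Function.Bijective fun x => f k x - f l x)
    (hheight : ∀ k (m : ℤ), |m| ≤ 55 → |f k (x + m) + y - k.height m| < 1 / 2)
    (h : Plane ≃ₜ Plane) :
    ∃ k, ∃ t ∈ Icc (-55 : ℝ) 55,
      IsBendPoint (h '' planeGraph (f k)) (h !₂[x + t, f k (x + t)]) := by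
  have hmeet : ∀ k l, ∃ z, k ≠ l → ∀ t, f k (x + t) = f l (x + t) ↔ t = z := by
    intro k l
    by_cases hkl : k = l
    · exact ⟨0, fun h => absurd hkl h⟩
    obtain ⟨z, hz, hunique⟩ := (hbij k l hkl).existsUnique 0
    refine ⟨z - x, fun _ t => ⟨fun ht => ?_, ?_⟩⟩
    · rw [← hunique (x + t) (sub_eq_zero.mpr ht), add_sub_cancel_left]
    · rintro rfl
      rw [add_sub_cancel]
      exact sub_eq_zero.mp hz
  choose T hT using hmeet
  let γ (k : Strand (Fin 3)) (t : ℝ) : Plane := h !₂[x + t, f k (x + t)]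
  have hγ : ∀ k, Continuous (γ k) := fun k =>
    h.continuous.comp (continuous_vec_two (by fun_prop) (by fun_prop))
  have hγ_eq : ∀ k l s t, γ k s = γ l t ↔ s = t ∧ f k (x + s) = f l (x + t) := by
    simp [γ]
  have hinterlaced : IsInterlaced T (Equiv.subRight 1) (Equiv.addRight 1) (-55) 55 :=
    Strand.isInterlaced_of_abs_sub_height_lt (F := fun k t => f k (x + t) + y)
      (fun k => by fun_prop) hheight (fun k l hkl t ht => (hT k l hkl t).mp (add_right_cancel ht))
  obtain ⟨k, hk⟩ := hinterlaced.exists_not_collinear (γ := γ) (fun k => (hγ k).continuousOn)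
    (fun k s _ t _ hst => ((hγ_eq k k s t).mp hst).1)
    (fun k l hkl s t => by grind)
  obtain ⟨t, ht, hbend⟩ := exists_isBendPoint_of_not_collinear isPreconnected_Icc
    (hγ k).continuousOn (fun s _ t _ hst => ((hγ_eq k k s t).mp hst).1)
    (fun t _ => mem_image_of_mem h vec_two_mem_planeGraph) hk
  exact ⟨k, t, ht, hbend⟩

theorem exists_card_div_card_le_ncard {α ι β : Type*} [Finite α] [Nonempty α] [Finite ι]
    {f : α → ι} {g : α → β} {B : ι → Set β} (hB : ∀ i, (B i).Finite) (hg : ∀ a, g a ∈ B (f a))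
    (hfg : ∀ a a', f a = f a' → g a = g a' → a = a') :
    ∃ i, (Nat.card α / Nat.card ι : ℝ) ≤ (B i).ncard := by
  classical
  cases nonempty_fintype α
  cases nonempty_fintype ι
  have : Nonempty ι := ‹Nonempty α›.map f
  obtain ⟨i, hi⟩ := Fintype.exists_le_card_fiber_of_nsmul_le_card f
    (b := (Nat.card α / Nat.card ι : ℝ)) (by
      rw [nsmul_eq_mul, Nat.card_eq_fintype_card, Nat.card_eq_fintype_card,
        mul_div_cancel₀ _ (by positivity)])
  refine ⟨i, hi.trans (mod_cast ?_)⟩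
  rw [← ncard_coe_finset]
  refine ncard_le_ncard_of_injOn g (fun a ha => ?_) (fun a ha a' ha' => ?_) (hB i)
  · exact (Finset.mem_filter.mp ha).2 ▸ hg a
  · exact hfg a a' ((Finset.mem_filter.mp ha).2.trans (Finset.mem_filter.mp ha').2.symm)

end Count

section Arrangement

theorem exists_isBendPoint_of_abs_sub_gridCurve_lt {N x y : ℕ} (hx : x < N)
    {f : Strand (Fin 3) → ℝ → ℝ} (hf : ∀ k, Continuous (f k))
    (hbij : ∀ k l, k ≠ l → Function.Bijective fun x => f k x - f l x)
    (hclose : ∀ k (t : ℝ), |t| ≤ 120 * N → |f k t - gridCurve k (y + k.slope * x) t| < 1 / 2)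
    (h : Plane ≃ₜ Plane) :
    ∃ k, ∃ t ∈ Icc (-55 : ℝ) 55,
      IsBendPoint (h '' planeGraph (f k)) (h !₂[120 * x + t, f k (120 * x + t)]) := by
  have hxN : (x : ℝ) + 1 ≤ N := mod_cast hx
  refine exists_isBendPoint_image_planeGraph (y := 120 * y) hf hbij (fun k m hm => ?_) h
  have hm' : |(m : ℝ)| ≤ 55 := mod_cast hm
  obtain ⟨hm₁, hm₂⟩ := abs_le.mp hm'
  have := hclose k (120 * x + m)
    (abs_le.mpr ⟨by linarith [x.cast_nonneg (α := ℝ)], by linarith⟩)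
  rwa [gridCurve_eq_height_sub k x y (by omega), sub_sub_eq_add_sub] at this

theorem Strand.add_slope_mul_lt (k : Strand (Fin 3)) {N : ℕ} (x y : Fin N) :
    (y + k.slope * x : ℕ) < 37 * N := by
  have hslope : k.slope ≤ 36 := by decide +revert
  nlinarith [x.2, y.2, Nat.mul_le_mul hslope x.2.le]

theorem Strand.card_prod_fin (N : ℕ) : Nat.card (Strand (Fin 3) × Fin (37 * N)) = 333 * N := by
  have hStrand : Nat.card (Strand (Fin 3)) = 9 := by rw [Nat.card_eq_fintype_card]; rfl
  rw [Nat.card_prod, hStrand, Nat.card_fin]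
  ring

theorem eq_of_mul_add_eq_mul_add {r s t : ℝ} {m n : ℕ} (hst : |s - t| < r)
    (h : r * m + s = r * n + t) : m = n := by
  rw [abs_sub_lt_iff] at hst
  have hmn : (m : ℝ) < n + 1 := by nlinarith
  have hnm : (n : ℝ) < m + 1 := by nlinarith
  norm_cast at hmn hnm
  omega

theorem exists_div_le_ncard_isBendPoint {N : ℕ} [NeZero N]
    {f : Strand (Fin 3) × Fin (37 * N) → ℝ → ℝ} (hf : ∀ i, Continuous (f i))
    (hbij : ∀ i j, i ≠ j → Function.Bijective fun x => f i x - f j x)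
    (hclose : ∀ i (x : ℝ), |x| ≤ 120 * N → |f i x - gridCurve i.1 i.2 x| < 1 / 2)
    (h : Plane ≃ₜ Plane) (hpoly : ∀ i, IsPolygonal (h '' planeGraph (f i))) :
    ∃ i, (N / 333 : ℝ) ≤ {p | IsBendPoint (h '' planeGraph (f i)) p}.ncard := by
  let curve (q : Fin N × Fin N) (k : Strand (Fin 3)) : Strand (Fin 3) × Fin (37 * N) :=
    (k, ⟨q.2 + k.slope * q.1, k.add_slope_mul_lt q.1 q.2⟩)
  have hcurve : ∀ q k l, k ≠ l → curve q k ≠ curve q l :=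
    fun q k l hkl heq => hkl (congrArg Prod.fst heq)
  choose k t ht hbend using fun q : Fin N × Fin N =>
    exists_isBendPoint_of_abs_sub_gridCurve_lt q.1.2 (fun k => hf (curve q k))
      (fun k l hkl => hbij _ _ (hcurve q k l hkl)) (fun k => hclose (curve q k)) h
  refine (exists_card_div_card_le_ncard (fun i => (hpoly i).finite_isBendPoint) hbend
    fun q q' hcurve_eq hpoint_eq => ?_).imp fun i hi => le_trans (le_of_eq ?_) hi
  · have hk : k q = k q' := congrArg Prod.fst hcurve_eq
    have hj : (q.2 + (k q).slope * q.1 : ℕ) = q'.2 + (k q').slope * q'.1 :=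
      congrArg (fun i => (i.2 : ℕ)) hcurve_eq
    have hx : (120 * (q.1 : ℕ) + t q : ℝ) = 120 * (q'.1 : ℕ) + t q' := by
      simpa using congrArg (· 0) (h.injective hpoint_eq)
    have hq₁ : q.1 = q'.1 := Fin.ext <| eq_of_mul_add_eq_mul_add (abs_sub_lt_iff.mpr
      ⟨by linarith [(ht q).2, (ht q').1], by linarith [(ht q).1, (ht q').2]⟩) hx
    rw [hk, hq₁] at hj
    exact Prod.ext hq₁ (Fin.ext (by omega))
  · have hN : (N : ℝ) ≠ 0 := NeZero.ne _
    rw [Strand.card_prod_fin, Nat.card_prod, Nat.card_fin]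
    push_cast
    field_simp

end Arrangement

/-- Theorem 3. There exist simple arrangements of `n` pseudolines
that, when represented by polygonal chains, require some pseudoline to have `Ω(n)`
bends. -/
theorem exists_arrangement_requiring_linear_bends :
    ∃ c : ℝ, 0 < c ∧
      {n : ℕ | ∃ L : Fin n → Set Plane,
        IsArrangement L ∧ IsSimple L ∧
        ∀ h : Plane ≃ₜ Plane,
          (∀ i, IsPolygonal (h '' L i)) →
          ∃ i, c * n ≤ ({p | IsBendPoint (h '' L i) p}.ncard : ℝ)}.Infinite := by
  refine ⟨1 / 333 ^ 2, by norm_num, infinite_of_injective_forall_mem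
    (f := fun N : ℕ => 333 * (N + 1)) (fun M N h => by simpa using h) fun N => ?_⟩
  obtain ⟨f, hf, hbij, htriple, hclose⟩ := exists_perturbation
    (Prod.fst : Strand (Fin 3) × Fin (37 * (N + 1)) → _) (fun i => i.2)
    (by positivity : (0 : ℝ) ≤ 120 * (N + 1 : ℕ))
  let e := (Finite.equivFinOfCardEq (Strand.card_prod_fin (N + 1))).symm
  refine ⟨fun i => planeGraph (f (e i)), isArrangement_planeGraph (fun i => hf _)
    (fun i j hij => hbij _ _ (e.injective.ne hij)), isSimple_planeGraph fun x i j k hij hik => ?_,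
    fun h hpoly => ?_⟩
  · simpa using htriple x (e i) (e j) (e k) hij hik
  · obtain ⟨j, hj⟩ := exists_div_le_ncard_isBendPoint hf hbij hclose h
      (e.surjective.forall.mpr hpoly)
    obtain ⟨i, rfl⟩ := e.surjective j
    exact ⟨i, le_trans (le_of_eq (by push_cast; ring)) hj⟩
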